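/- Fix positive real numbers α and β with αβ = 4. Define g_α : (0,∞) → ℝ by g_α(t) = 1/(2(2+αt)) for 0 < t ≤ 2/α and g_α(t) = −1/(αt(2+αt)) for t > 2/α. Then: (a) g_α ∈ L¹((0,∞)); (b) ∫₀^∞ e^{iπαmt} g_α(t) dt = 0 for all m ∈ ℤ and ∫₀^∞ e^{−iπβn/t} g_α(t) dt = 0 for all n ∈ ℤ; (c) every f ∈ L¹((0,∞), ℂ) satisfying ∫₀^∞ e^{iπαmt} f(t) dt = 0 for all m ∈ ℤ and ∫₀^∞ e^{−iπβn/t} f(t) dt = 0 for all n ∈ ℤ equals c·g_α almost everywhere on (0,∞) for some constant c ∈ ℂ. -/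

import Mathlib

/-!
After rescaling, `α = β = 2`, and the two families of conditions say that the pushforwards of
`f(t) dt` to the circle by `t ↦ t` and by `t ↦ 1/t` have vanishing Fourier coefficients. Hence `f`
integrates to zero over every set that is measurable with respect to `fract t` or to `fract (1/t)`.
Split `(0, ∞)` at `1`: on each half one of these two fractional parts is trivial, which gives two
relations between the restrictions of `f` to `(0, 1)` and to `(1, ∞)`. Together they say that `f` on
`(0, 1)` is the density of a complex measure invariant under the square of the Gauss map
`x ↦ fract (1/x)`, and that it determines `f` on `(1, ∞)`.

The Gauss map is mixing, so such a density is determined by its total mass. Mixing comes from the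
Gauss–Kuzmin–Wirsing operator, normalised to be Markov: it sends monotone functions to antitone ones
and at least halves the variation `|h 1 - h 0|`, and monotone functions suffice to test against.

Conversely, folding `(1, ∞)` onto `(0, 1)` by `t ↦ 1/t` turns both halves of `gcrit 2`, up to
opposite signs, into the same multiple of the Gauss density, so `gcrit 2` annihilates because the
Gauss measure is invariant.
-/

open MeasureTheory Real

/-- The explicit annihilating density in the critical regime `αβ = 4`. -/
noncomputable def gcrit (α : ℝ) (t : ℝ) : ℝ :=
  if t ≤ 2 / α then 1 / (2 * (2 + α * t)) else -(1 / (α * t * (2 + α * t)))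

open Filter Set Topology

section MixingSequence

variable {X ι : Type*} {m : MeasurableSpace X} {μ : Measure X} {l : Filter ι}
  {A : ι → Set X} {c : ℝ}

theorem hasSum_measureReal_inter_iUnion [IsFiniteMeasure μ] (B : Set X) {s : ℕ → Set X}
    (hs : ∀ i, MeasurableSet (s i)) (hdisj : Pairwise (Function.onFun Disjoint s)) :
    HasSum (fun i ↦ μ.real (B ∩ s i)) (μ.real (B ∩ ⋃ i, s i)) := by
  have h := hasSum_integral_iUnion (μ := μ.restrict B) (f := fun _ ↦ (1 : ℝ)) hs hdisj
    (integrable_const 1).integrableOn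
  simpa [measureReal_restrict_apply, hs, MeasurableSet.iUnion hs, inter_comm] using h

theorem tendsto_measureReal_inter_of_isPiSystem [IsFiniteMeasure μ] {𝓒 : Set (Set X)}
    (h_gen : m = MeasurableSpace.generateFrom 𝓒) (h_pi : IsPiSystem 𝓒)
    (h_univ : Tendsto (fun n ↦ μ.real (A n)) l (𝓝 (c * μ.real univ)))
    (h_basic : ∀ s ∈ 𝓒, Tendsto (fun n ↦ μ.real (A n ∩ s)) l (𝓝 (c * μ.real s)))
    {s : Set X} (hs : MeasurableSet s) :
    Tendsto (fun n ↦ μ.real (A n ∩ s)) l (𝓝 (c * μ.real s)) := by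
  induction s, hs using MeasurableSpace.induction_on_inter h_gen h_pi with
  | empty => simp [tendsto_const_nhds]
  | basic s hs => exact h_basic s hs
  | compl s hs ih =>
    have hinter (n : ι) : μ.real (A n ∩ sᶜ) = μ.real (A n) - μ.real (A n ∩ s) :=
      eq_sub_of_add_eq' (measureReal_inter_add_sdiff hs)
    simp only [hinter, measureReal_compl hs, mul_sub]
    exact h_univ.sub ih
  | iUnion s hdisj hs ih =>
    have hsum : HasSum (fun i ↦ μ.real (s i)) (μ.real (⋃ i, s i)) := by
      simpa only [univ_inter] using hasSum_measureReal_inter_iUnion univ hs hdisj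
    have hsum_inter (n : ι) := hasSum_measureReal_inter_iUnion (μ := μ) (A n) hs hdisj
    simp only [← (hsum_inter _).tsum_eq, ← hsum.tsum_eq, ← tsum_mul_left]
    refine tendsto_tsum_of_dominated_convergence hsum.summable ih (.of_forall fun n i ↦ ?_)
    rw [norm_of_nonneg measureReal_nonneg]
    exact measureReal_mono inter_subset_right

theorem lipschitzWith_setIntegral {E : Type*} [NormedAddCommGroup E] [NormedSpace ℝ E]
    (μ : Measure X) (s : Set X) : LipschitzWith 1 fun f : X →₁[μ] E ↦ ∫ x in s, f x ∂μ := by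
  refine LipschitzWith.of_dist_le_mul fun f g ↦ ?_
  have hf : Integrable f μ := L1.integrable_coeFn f
  have hg : Integrable g μ := L1.integrable_coeFn g
  calc dist (∫ x in s, f x ∂μ) (∫ x in s, g x ∂μ)
      = ‖∫ x in s, f x - g x ∂μ‖ := by
        rw [dist_eq_norm, integral_sub hf.integrableOn hg.integrableOn]
    _ ≤ ∫ x in s, ‖f x - g x‖ ∂μ := norm_integral_le_integral_norm _
    _ ≤ ∫ x, ‖f x - g x‖ ∂μ :=
        setIntegral_le_integral (hf.sub hg).norm (.of_forall fun x ↦ norm_nonneg _)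
    _ = (1 : NNReal) * dist f g := by
        rw [NNReal.coe_one, one_mul, dist_eq_norm, L1.norm_eq_integral_norm]
        refine integral_congr_ae ?_
        filter_upwards [Lp.coeFn_sub f g] with x hx
        rw [hx, Pi.sub_apply]

theorem tendsto_setIntegral_of_tendsto_measureReal_inter {E : Type*} [NormedAddCommGroup E]
    [NormedSpace ℝ E] [CompleteSpace E]
    (h : ∀ s, MeasurableSet s → Tendsto (fun n ↦ μ.real (A n ∩ s)) l (𝓝 (c * μ.real s)))
    {f : X → E} (hf : Integrable f μ) :
    Tendsto (fun n ↦ ∫ x in A n, f x ∂μ) l (𝓝 (c • ∫ x, f x ∂μ)) := by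
  refine Integrable.induction
    (P := fun f ↦ Tendsto (fun n ↦ ∫ x in A n, f x ∂μ) l (𝓝 (c • ∫ x, f x ∂μ)))
    (fun v s hs _ ↦ ?indicator) (fun f g _ hf hg ihf ihg ↦ ?add) ?closed
    (fun f g hfg _ ih ↦ ?congr) hf
  case indicator =>
    simp only [integral_indicator_const v hs, smul_smul, measureReal_restrict_apply hs]
    simpa only [inter_comm] using (h s hs).smul_const v
  case add =>
    simp only [Pi.add_apply, integral_add hf hg, integral_add hf.integrableOn hg.integrableOn,
      smul_add]
    exact ihf.add ihg
  case closed =>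
    exact (LipschitzWith.uniformEquicontinuous _ 1 fun n ↦
      lipschitzWith_setIntegral μ (A n)).equicontinuous.isClosed_setOfPred_tendsto
      (continuous_integral.const_smul c)
  case congr =>
    simpa only [integral_congr_ae hfg, integral_congr_ae (ae_restrict_of_ae hfg)] using ih

end MixingSequence

section FourierCoefficients

variable {X : Type*} [MeasurableSpace X] {μ : Measure X} {f : X → ℂ}

theorem integral_comp_mul_eq_zero_of_integral_fourier_eq_zero {T : ℝ} [Fact (0 < T)]
    {G : X → AddCircle T} (hf : Integrable f μ) (hG : Measurable G)
    (h : ∀ m : ℤ, ∫ x, fourier m (G x) * f x ∂μ = 0) (φ : C(AddCircle T, ℂ)) :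
    ∫ x, φ (G x) * f x ∂μ = 0 := by
  have hint (ψ : C(AddCircle T, ℂ)) : Integrable (fun x ↦ ψ (G x) * f x) μ :=
    hf.bdd_mul (ψ.continuous.measurable.comp hG).aestronglyMeasurable
      (.of_forall fun x ↦ ψ.norm_coe_le_norm _)
  let Λ : C(AddCircle T, ℂ) →L[ℂ] ℂ := LinearMap.mkContinuous
    { toFun ψ := ∫ x, ψ (G x) * f x ∂μ
      map_add' ψ χ := by
        simp only [ContinuousMap.add_apply, add_mul, integral_add (hint ψ) (hint χ)]
      map_smul' a ψ := by
        simp only [ContinuousMap.smul_apply, smul_eq_mul, mul_assoc, integral_const_mul,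
          RingHom.id_apply] }
    (∫ x, ‖f x‖ ∂μ) fun ψ ↦ by
      rw [mul_comm, ← integral_const_mul]
      refine norm_integral_le_of_norm_le (hf.norm.const_mul _) (.of_forall fun x ↦ ?_)
      rw [norm_mul]
      gcongr
      exact ψ.norm_coe_le_norm _
  have hΛ : Λ = 0 := by
    refine ContinuousLinearMap.ext_on (s := range fourier)
      (Submodule.dense_iff_topologicalClosure_eq_top.2 span_fourier_closure_eq_top) ?_
    rintro _ ⟨m, rfl⟩
    exact h m
  exact DFunLike.congr_fun hΛ φ

theorem setIntegral_preimage_eq_zero_of_isClosed {Y : Type*} [TopologicalSpace Y]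
    [MeasurableSpace Y] [BorelSpace Y] [HasOuterApproxClosed Y] {G : X → Y} (hf : Integrable f μ)
    (hG : Measurable G) (h : ∀ φ : C(Y, ℂ), ∫ x, φ (G x) * f x ∂μ = 0) {F : Set Y}
    (hF : IsClosed F) : ∫ x in G ⁻¹' F, f x ∂μ = 0 := by
  let φ (n : ℕ) : C(Y, ℂ) := ⟨fun y ↦ ((hF.apprSeq n y : ℝ) : ℂ), by fun_prop⟩
  have hlim : Tendsto (fun n ↦ ∫ x, φ n (G x) * f x ∂μ) atTop
      (𝓝 (∫ x, (G ⁻¹' F).indicator f x ∂μ)) := by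
    refine tendsto_integral_of_dominated_convergence (fun x ↦ ‖f x‖) (fun n ↦ ?_) hf.norm
      (fun n ↦ .of_forall fun x ↦ ?_) (.of_forall fun x ↦ ?_)
    · exact ((φ n).continuous.measurable.comp hG).aestronglyMeasurable.mul hf.aestronglyMeasurable
    · have hle : (hF.apprSeq n (G x) : ℝ) ≤ 1 := HasOuterApproxClosed.apprSeq_apply_le_one hF n _
      simpa [φ] using mul_le_of_le_one_left (norm_nonneg (f x)) hle
    · have htend := tendsto_pi_nhds.1 (HasOuterApproxClosed.tendsto_apprSeq hF) (G x)
      have hφ : Tendsto (fun n ↦ φ n (G x)) atTop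
          (𝓝 (((F.indicator (fun _ ↦ 1) (G x) : NNReal) : ℝ) : ℂ)) :=
        (Complex.continuous_ofReal.comp NNReal.continuous_coe).continuousAt.tendsto.comp htend
      convert hφ.mul_const (f x) using 2
      by_cases hx : G x ∈ F <;> simp [hx]
  simp only [h, integral_indicator (hG hF.measurableSet)] at hlim
  exact tendsto_nhds_unique hlim tendsto_const_nhds

theorem setIntegral_preimage_eq_zero_of_integral_comp_mul_eq_zero {Y : Type*} [TopologicalSpace Y]
    [MeasurableSpace Y] [BorelSpace Y] [HasOuterApproxClosed Y] {G : X → Y} (hf : Integrable f μ)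
    (hG : Measurable G) (h : ∀ φ : C(Y, ℂ), ∫ x, φ (G x) * f x ∂μ = 0) {E : Set Y}
    (hE : MeasurableSet E) : ∫ x in G ⁻¹' E, f x ∂μ = 0 := by
  have huniv : ∫ x, f x ∂μ = 0 := by simpa using h 1
  have hgen : ‹MeasurableSpace Y› = MeasurableSpace.generateFrom {s | IsClosed s} :=
    BorelSpace.measurable_eq.trans borel_eq_generateFrom_isClosed
  induction E, hE using MeasurableSpace.induction_on_inter hgen isPiSystem_isClosed with
  | empty => simp
  | basic F hF => exact setIntegral_preimage_eq_zero_of_isClosed hf hG h hF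
  | compl E hE ih =>
    rw [preimage_compl, ← huniv, ← integral_add_compl (hG hE) hf, ih, zero_add]
  | iUnion E hdisj hE ih =>
    rw [preimage_iUnion, integral_iUnion (fun i ↦ hG (hE i))
      (fun i j hij ↦ (hdisj hij).preimage G) hf.integrableOn]
    simp only [ih, tsum_zero]

theorem setIntegral_fract_preimage_eq_zero {g : X → ℝ} (hf : Integrable f μ) (hg : Measurable g)
    (h : ∀ m : ℤ, ∫ x, fourier m (g x : UnitAddCircle) * f x ∂μ = 0) {E : Set ℝ}
    (hE : MeasurableSet E) : ∫ x in (fun x ↦ Int.fract (g x)) ⁻¹' E, f x ∂μ = 0 := by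
  have hG : Measurable fun x ↦ (g x : UnitAddCircle) := AddCircle.measurable_mk'.comp hg
  let E' : Set UnitAddCircle := (fun z ↦ (AddCircle.measurableEquivIco (1 : ℝ) 0 z : ℝ)) ⁻¹' E
  have hE' : MeasurableSet E' :=
    (measurable_subtype_coe.comp (AddCircle.measurableEquivIco (1 : ℝ) 0).measurable) hE
  have hset : (fun x ↦ Int.fract (g x)) ⁻¹' E = (fun x ↦ (g x : UnitAddCircle)) ⁻¹' E' := by
    ext x
    have hfract : (AddCircle.equivIco (1 : ℝ) 0 (g x : UnitAddCircle) : ℝ) = Int.fract (g x) := by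
      simp [AddCircle.coe_equivIco_mk_apply]
    exact iff_of_eq (congrArg (· ∈ E) hfract.symm)
  rw [hset]
  exact setIntegral_preimage_eq_zero_of_integral_comp_mul_eq_zero hf hG
    (integral_comp_mul_eq_zero_of_integral_fourier_eq_zero hf hG h) hE'

end FourierCoefficients

/-- The Gauss map `x ↦ {1 / x}`. -/
noncomputable def gaussMap (x : ℝ) : ℝ := Int.fract x⁻¹

theorem measurable_gaussMap : Measurable gaussMap := measurable_fract.comp measurable_inv

/-- The inverse branch of the Gauss map on the interval `(1 / (k + 2), 1 / (k + 1)]`. -/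
noncomputable def gaussBranch (k : ℕ) (x : ℝ) : ℝ := (x + k + 1)⁻¹

section GaussBranches

variable {k : ℕ} {x : ℝ}

theorem gaussBranch_injective (k : ℕ) : Function.Injective (gaussBranch k) := fun x y hxy ↦ by
  simpa [gaussBranch] using hxy

theorem hasDerivAt_gaussBranch (k : ℕ) (hx : 0 ≤ x) :
    HasDerivAt (gaussBranch k) (-1 / (x + k + 1) ^ 2) x :=
  (((hasDerivAt_id x).add_const (k : ℝ)).add_const (1 : ℝ)).inv (by simp only [id]; positivity)

theorem gaussMap_gaussBranch (hx : x ∈ Ico (0 : ℝ) 1) : gaussMap (gaussBranch k x) = x := by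
  have hcast : x + k + 1 = x + ((k + 1 : ℕ) : ℝ) := by push_cast; ring
  rw [gaussMap, gaussBranch, inv_inv, hcast, Int.fract_add_natCast, Int.fract_eq_self.2 hx]

theorem gaussBranch_image_Ico : gaussBranch k '' Ico 0 1 = {x | 0 < x ∧ ⌊x⁻¹⌋ = (k : ℤ) + 1} := by
  ext z
  simp only [gaussBranch, mem_image, mem_Ico, mem_ofPred_eq, Int.floor_eq_iff]
  push_cast
  constructor
  · rintro ⟨x, ⟨hx0, hx1⟩, rfl⟩
    rw [inv_inv]
    exact ⟨by positivity, by linarith, by linarith⟩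
  · rintro ⟨_, hle, hlt⟩
    exact ⟨z⁻¹ - k - 1, ⟨by linarith, by linarith⟩, by ring_nf; exact inv_inv z⟩

theorem iUnion_gaussBranch_image_Ico : ⋃ k, gaussBranch k '' Ico 0 1 = Ioc (0 : ℝ) 1 := by
  ext z
  simp only [gaussBranch_image_Ico, mem_iUnion, mem_ofPred_eq, mem_Ioc]
  constructor
  · rintro ⟨k, hz, hfloor⟩
    have hone : (1 : ℤ) ≤ ⌊z⁻¹⌋ := by omega
    exact ⟨hz, (one_le_inv₀ hz).1 (by exact_mod_cast Int.le_floor.1 hone)⟩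
  · rintro ⟨hz, hz1⟩
    have hone : 1 ≤ ⌊z⁻¹⌋ := Int.le_floor.2 (by exact_mod_cast (one_le_inv₀ hz).2 hz1)
    exact ⟨(⌊z⁻¹⌋ - 1).toNat, hz, by omega⟩

theorem pairwise_disjoint_gaussBranch_image_Ico :
    Pairwise (Function.onFun Disjoint fun k ↦ gaussBranch k '' Ico 0 1) := fun i j hij ↦ by
  simp only [Function.onFun, gaussBranch_image_Ico]
  exact Set.disjoint_left.2 fun z hi hj ↦
    hij (by exact_mod_cast add_right_cancel (hi.2.symm.trans hj.2))

theorem measurableSet_gaussBranch_image_Ico : MeasurableSet (gaussBranch k '' Ico 0 1) := by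
  rw [gaussBranch_image_Ico]
  exact measurableSet_Ioi.inter
    ((Int.measurable_floor.comp measurable_inv) (measurableSet_singleton _))

theorem gaussBranch_image_inter (P : Set ℝ) :
    gaussBranch k '' (P ∩ Ico 0 1) = gaussMap ⁻¹' P ∩ gaussBranch k '' Ico 0 1 := by
  rw [inter_comm _ (_ '' _), ← image_inter_preimage, inter_comm P]
  refine congrArg _ (Set.ext fun x ↦ and_congr_right fun hx ↦ ?_)
  simp only [mem_preimage, gaussMap_gaussBranch hx]

variable {E : Type*} [NormedAddCommGroup E] [NormedSpace ℝ E] {f : ℝ → E} {P : Set ℝ}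

theorem setIntegral_gaussBranch_image (f : ℝ → E) (hP : MeasurableSet P) :
    ∫ x in gaussBranch k '' (P ∩ Ico 0 1), f x =
      ∫ x in P, ((x + k + 1) ^ 2)⁻¹ • f (gaussBranch k x) ∂volume.restrict (Ioo 0 1) := by
  rw [integral_image_eq_integral_abs_deriv_smul (hP.inter measurableSet_Ico)
    (fun x hx ↦ (hasDerivAt_gaussBranch k hx.2.1).hasDerivWithinAt) (gaussBranch_injective k).injOn,
    restrict_Ioo_eq_restrict_Ico, Measure.restrict_restrict hP]
  simp only [abs_div, abs_neg, abs_one, abs_pow, sq_abs, one_div]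

theorem integrableOn_gaussBranch (k : ℕ) (hf : IntegrableOn f (Ioo 0 1)) :
    IntegrableOn (fun x : ℝ ↦ ((x + k + 1) ^ 2)⁻¹ • f (gaussBranch k x)) (Ioo 0 1) := by
  have hsubset : gaussBranch k '' Ico 0 1 ⊆ Ioc 0 1 :=
    iUnion_gaussBranch_image_Ico ▸ subset_iUnion (fun k ↦ gaussBranch k '' Ico 0 1) k
  have himage := ((integrableOn_Ioc_iff_integrableOn_Ioo (by simp)).2 hf).mono_set hsubset
  rw [integrableOn_image_iff_integrableOn_abs_deriv_smul measurableSet_Ico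
    (fun x hx ↦ (hasDerivAt_gaussBranch k hx.1).hasDerivWithinAt) (gaussBranch_injective k).injOn]
    at himage
  simpa [abs_div] using himage.mono_set Ioo_subset_Ico_self

theorem hasSum_setIntegral_gaussMap_preimage (hf : IntegrableOn f (Ioo 0 1))
    (hP : MeasurableSet P) :
    HasSum (fun k : ℕ ↦
        ∫ x in P, ((x + k + 1) ^ 2)⁻¹ • f (gaussBranch k x) ∂volume.restrict (Ioo 0 1))
      (∫ x in gaussMap ⁻¹' P, f x ∂volume.restrict (Ioo 0 1)) := by
  have hP' : MeasurableSet (gaussMap ⁻¹' P) := measurable_gaussMap hP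
  have hunion : ⋃ k, gaussBranch k '' (P ∩ Ico 0 1) = gaussMap ⁻¹' P ∩ Ioc 0 1 := by
    simp only [gaussBranch_image_inter, ← inter_iUnion, iUnion_gaussBranch_image_Ico]
  simp only [restrict_Ioo_eq_restrict_Ioc, Measure.restrict_restrict hP', ← hunion]
  simp only [← restrict_Ioo_eq_restrict_Ioc, ← setIntegral_gaussBranch_image f hP]
  refine hasSum_integral_iUnion (fun k ↦ ?_) (fun i j hij ↦ ?_) ?_
  · rw [gaussBranch_image_inter]
    exact hP'.inter measurableSet_gaussBranch_image_Ico
  · exact (pairwise_disjoint_gaussBranch_image_Ico hij).mono (image_mono inter_subset_right)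
      (image_mono inter_subset_right)
  · rw [hunion]
    exact ((integrableOn_Ioc_iff_integrableOn_Ioo (by simp)).2 hf).mono_set inter_subset_right

end GaussBranches

theorem hasSum_mul_le_hasSum_mul_of_antitone {p q c : ℕ → ℝ} {a b b' L : ℝ} (hp : HasSum p a)
    (hq : HasSum q a) (hqp : ∀ n, ∑ i ∈ Finset.range n, q i ≤ ∑ i ∈ Finset.range n, p i)
    (hc : Antitone c) (hL : ∀ n, L ≤ c n) (hqc : HasSum (fun n ↦ q n * c n) b)
    (hpc : HasSum (fun n ↦ p n * c n) b') : b ≤ b' := by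
  have hnonneg (n : ℕ) : 0 ≤ ∑ i ∈ Finset.range n, (p i - q i) := by
    simpa only [Finset.sum_sub_distrib, sub_nonneg] using hqp n
  have habel (n : ℕ) :
      (∑ i ∈ Finset.range n, (p i - q i)) * c n ≤ ∑ i ∈ Finset.range n, (p i - q i) * c i := by
    induction n with
    | zero => simp
    | succ n ih =>
      calc _ ≤ (∑ i ∈ Finset.range (n + 1), (p i - q i)) * c n :=
            mul_le_mul_of_nonneg_left (hc n.le_succ) (hnonneg _)
        _ ≤ _ := by rw [Finset.sum_range_succ, Finset.sum_range_succ, add_mul]; gcongr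
  have hleft : Tendsto (fun n ↦ (∑ i ∈ Finset.range n, (p i - q i)) * L) atTop (𝓝 0) := by
    simpa using (hp.sub hq).tendsto_sum_nat.mul_const L
  have hright : Tendsto (fun n ↦ ∑ i ∈ Finset.range n, (p i - q i) * c i) atTop (𝓝 (b' - b)) := by
    simpa only [sub_mul] using (hpc.sub hqc).tendsto_sum_nat
  exact sub_nonneg.1 <| le_of_tendsto_of_tendsto' hleft hright fun n ↦
    (mul_le_mul_of_nonneg_left (hL n) (hnonneg n)).trans (habel n)

/-- The transition probability of the Gauss map, run backwards under the Gauss measure, from `x` to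
the preimage `gaussBranch k x`. -/
noncomputable def gaussWeight (k : ℕ) (x : ℝ) : ℝ := (1 + x) / ((x + k + 1) * (x + k + 2))

/-- The Gauss–Kuzmin–Wirsing operator with respect to the Gauss measure: it averages `h` over the
preimages of `x` under the Gauss map. It is a series in `ℝ`, so it is meaningful only where the
series converges. -/
noncomputable def gaussMarkov (h : ℝ → ℝ) (x : ℝ) : ℝ := ∑' k, gaussWeight k x * h (gaussBranch k x)

section GaussMarkov

variable {h : ℝ → ℝ} {x : ℝ}

theorem gaussWeight_nonneg (k : ℕ) (hx : 0 ≤ x) : 0 ≤ gaussWeight k x := by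
  unfold gaussWeight; positivity

theorem sum_range_gaussWeight (hx : 0 ≤ x) (n : ℕ) :
    ∑ k ∈ Finset.range n, gaussWeight k x = n / (x + n + 1) := by
  induction n with
  | zero => simp
  | succ n ih =>
    rw [Finset.sum_range_succ, ih, gaussWeight]
    push_cast
    field_simp
    ring

theorem hasSum_gaussWeight (hx : 0 ≤ x) : HasSum (fun k ↦ gaussWeight k x) 1 := by
  rw [hasSum_iff_tendsto_nat_of_nonneg fun k ↦ gaussWeight_nonneg k hx]
  simp only [sum_range_gaussWeight hx]
  convert tendsto_natCast_div_add_atTop (x + 1) using 3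
  ring

theorem gaussBranch_mem_Icc (k : ℕ) (hx : 0 ≤ x) : gaussBranch k x ∈ Icc (0 : ℝ) 1 := by
  refine ⟨by unfold gaussBranch; positivity, inv_le_one_of_one_le₀ ?_⟩
  exact le_add_of_nonneg_left (by positivity)

theorem gaussBranch_le_gaussBranch {j k : ℕ} {x y : ℝ} (hjk : j ≤ k) (hx : 0 ≤ x) (hxy : x ≤ y) :
    gaussBranch k y ≤ gaussBranch j x := by
  unfold gaussBranch; gcongr

theorem summable_gaussWeight_mul (hh : MonotoneOn h (Icc 0 1)) (hx : 0 ≤ x) {z : ℕ → ℝ}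
    (hz : ∀ k, z k ∈ Icc (0 : ℝ) 1) : Summable fun k ↦ gaussWeight k x * h (z k) := by
  refine .of_norm_bounded ((hasSum_gaussWeight hx).summable.mul_right (max |h 0| |h 1|)) fun k ↦ ?_
  rw [norm_mul, norm_of_nonneg (gaussWeight_nonneg k hx)]
  exact mul_le_mul_of_nonneg_left (abs_le_max_abs_abs
    (hh (left_mem_Icc.2 zero_le_one) (hz k) (hz k).1)
    (hh (hz k) (right_mem_Icc.2 zero_le_one) (hz k).2)) (gaussWeight_nonneg k hx)

theorem hasSum_gaussMarkov (hh : MonotoneOn h (Icc 0 1)) (hx : 0 ≤ x) :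
    HasSum (fun k ↦ gaussWeight k x * h (gaussBranch k x)) (gaussMarkov h x) :=
  (summable_gaussWeight_mul hh hx fun k ↦ gaussBranch_mem_Icc k hx).hasSum

theorem gaussMarkov_const_one (hx : 0 ≤ x) : gaussMarkov (fun _ ↦ 1) x = 1 := by
  simpa only [gaussMarkov, mul_one] using (hasSum_gaussWeight hx).tsum_eq

/-- As `x` increases, the preimages of `x` move left and the transition probabilities shift towards
the smaller preimages. -/
theorem antitoneOn_gaussMarkov (hh : MonotoneOn h (Icc 0 1)) :
    AntitoneOn (gaussMarkov h) (Icc 0 1) := by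
  intro x hx y hy hxy
  have hxmem (k : ℕ) := gaussBranch_mem_Icc k hx.1
  have hymem (k : ℕ) := gaussBranch_mem_Icc k hy.1
  have hsum := (summable_gaussWeight_mul hh hy.1 hxmem).hasSum
  calc gaussMarkov h y ≤ ∑' k, gaussWeight k y * h (gaussBranch k x) :=
        hasSum_le (fun k ↦ mul_le_mul_of_nonneg_left
          (hh (hymem k) (hxmem k) (gaussBranch_le_gaussBranch le_rfl hx.1 hxy))
          (gaussWeight_nonneg k hy.1)) (hasSum_gaussMarkov hh hy.1) hsum
    _ ≤ gaussMarkov h x := by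
        refine hasSum_mul_le_hasSum_mul_of_antitone (L := h 0) (hasSum_gaussWeight hx.1)
          (hasSum_gaussWeight hy.1) (fun n ↦ ?_) (fun j k hjk ↦ ?_) (fun k ↦ ?_) hsum
          (hasSum_gaussMarkov hh hx.1)
        · rw [sum_range_gaussWeight hx.1, sum_range_gaussWeight hy.1]
          have hx0 := hx.1
          gcongr
        · exact hh (hxmem k) (hxmem j) (gaussBranch_le_gaussBranch hjk hx.1 le_rfl)
        · exact hh (left_mem_Icc.2 zero_le_one) (hxmem k) (hxmem k).1

/-- The transition probabilities from `1` are twice those from `0`, shifted by one. -/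
theorem gaussMarkov_apply_one (hh : MonotoneOn h (Icc 0 1)) :
    gaussMarkov h 1 = 2 * gaussMarkov h 0 - h 1 := by
  have hshift (k : ℕ) : gaussWeight k 1 * h (gaussBranch k 1) =
      2 * (gaussWeight (k + 1) 0 * h (gaussBranch (k + 1) 0)) := by
    have hweight : gaussWeight k 1 = 2 * gaussWeight (k + 1) 0 := by
      simp only [gaussWeight]; push_cast; field_simp; ring
    have hbranch : gaussBranch k 1 = gaussBranch (k + 1) 0 := by
      simp only [gaussBranch]; push_cast; congr 1; ring
    rw [hweight, hbranch, mul_assoc]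
  have hzero : gaussMarkov h 0 = h 1 / 2 + gaussMarkov h 1 / 2 := by
    rw [gaussMarkov, (hasSum_gaussMarkov hh le_rfl).summable.tsum_eq_zero_add]
    simp only [gaussMarkov, hshift, tsum_mul_left]
    simp only [gaussWeight, gaussBranch]
    norm_num
    ring
  linarith

theorem gaussMarkov_zero_sub_one_le (hh : MonotoneOn h (Icc 0 1)) :
    gaussMarkov h 0 - gaussMarkov h 1 ≤ (h 1 - h 0) / 2 := by
  have hle : h 0 ≤ gaussMarkov h 1 := by
    rw [← one_mul (h 0)]
    refine hasSum_le (fun k ↦ ?_) ((hasSum_gaussWeight zero_le_one).mul_right (h 0))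
      (hasSum_gaussMarkov hh zero_le_one)
    have hmem := gaussBranch_mem_Icc k zero_le_one
    exact mul_le_mul_of_nonneg_left (hh (left_mem_Icc.2 zero_le_one) hmem hmem.1)
      (gaussWeight_nonneg k zero_le_one)
  linarith [gaussMarkov_apply_one hh]

end GaussMarkov

/-- The density of the Gauss measure with respect to Lebesgue measure on `(0, 1)`. -/
noncomputable def gaussDensity (x : ℝ) : ℝ := (log 2 * (1 + x))⁻¹

/-- The Gauss measure, a probability measure on `ℝ` carried by `(0, 1)`. -/
noncomputable def gaussMeasure : Measure ℝ :=
  (volume.restrict (Ioo 0 1)).withDensity fun x ↦ ENNReal.ofReal (gaussDensity x)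

section GaussMeasure

variable {h : ℝ → ℝ} {P : Set ℝ}

theorem measurable_gaussDensity : Measurable gaussDensity := by
  unfold gaussDensity; fun_prop

theorem gaussDensity_pos {x : ℝ} (hx : 0 ≤ x) : 0 < gaussDensity x := by
  unfold gaussDensity; positivity

theorem toReal_ofReal_gaussDensity_ae :
    ∀ᵐ x ∂volume.restrict (Ioo (0 : ℝ) 1),
      (ENNReal.ofReal (gaussDensity x)).toReal = gaussDensity x := by
  filter_upwards [ae_restrict_mem measurableSet_Ioo] with x hx
  exact ENNReal.toReal_ofReal (gaussDensity_pos hx.1.le).le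

theorem ae_mem_Ioo_gaussMeasure : ∀ᵐ x ∂gaussMeasure, x ∈ Ioo (0 : ℝ) 1 :=
  (withDensity_absolutelyContinuous _ _).ae_le (ae_restrict_mem measurableSet_Ioo)

theorem integrable_gaussMeasure_iff :
    Integrable h gaussMeasure ↔ IntegrableOn (fun x ↦ gaussDensity x * h x) (Ioo 0 1) := by
  rw [gaussMeasure, integrable_withDensity_iff_integrable_smul'
    measurable_gaussDensity.ennreal_ofReal (by simp), IntegrableOn]
  refine integrable_congr ?_
  filter_upwards [toReal_ofReal_gaussDensity_ae] with x hx
  rw [hx, smul_eq_mul]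

theorem setIntegral_gaussMeasure {E : Type*} [NormedAddCommGroup E] [NormedSpace ℝ E] (f : ℝ → E)
    (hP : MeasurableSet P) :
    ∫ x in P, f x ∂gaussMeasure = ∫ x in P, gaussDensity x • f x ∂volume.restrict (Ioo 0 1) := by
  rw [gaussMeasure, setIntegral_withDensity_eq_setIntegral_toReal_smul
    measurable_gaussDensity.ennreal_ofReal (by simp) _ hP]
  refine integral_congr_ae ?_
  filter_upwards [ae_restrict_of_ae toReal_ofReal_gaussDensity_ae] with x hx
  rw [hx]

theorem integral_gaussDensity : ∫ x in Ioo (0 : ℝ) 1, gaussDensity x = 1 := by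
  have hlog : ∫ x in Ioo (0 : ℝ) 1, (1 + x)⁻¹ = log 2 := by
    rw [← integral_Ioc_eq_integral_Ioo, ← intervalIntegral.integral_of_le zero_le_one,
      intervalIntegral.integral_comp_add_left (fun x ↦ x⁻¹), integral_inv_of_pos] <;> norm_num
  simp only [gaussDensity, mul_inv, integral_const_mul, hlog]
  exact inv_mul_cancel₀ (log_pos one_lt_two).ne'

instance isProbabilityMeasure_gaussMeasure : IsProbabilityMeasure gaussMeasure where
  measure_univ := by
    have hint : IntegrableOn gaussDensity (Ioo 0 1) := .of_integral_ne_zero <| by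
      rw [integral_gaussDensity]; exact one_ne_zero
    have hnonneg : 0 ≤ᵐ[volume.restrict (Ioo (0 : ℝ) 1)] gaussDensity := by
      filter_upwards [ae_restrict_mem measurableSet_Ioo] with x hx
      exact (gaussDensity_pos hx.1.le).le
    rw [gaussMeasure, withDensity_apply _ MeasurableSet.univ, Measure.restrict_univ,
      ← ofReal_integral_eq_lintegral_ofReal hint hnonneg, integral_gaussDensity, ENNReal.ofReal_one]

theorem gaussDensity_gaussBranch (k : ℕ) {x : ℝ} (hx : 0 ≤ x) :
    ((x + k + 1) ^ 2)⁻¹ * gaussDensity (gaussBranch k x) = gaussDensity x * gaussWeight k x := by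
  simp only [gaussDensity, gaussBranch, gaussWeight]
  field_simp
  ring

theorem ae_gaussBranch_eq (k : ℕ) (h : ℝ → ℝ) : ∀ᵐ x : ℝ ∂volume.restrict (Ioo (0 : ℝ) 1),
    ((x + k + 1) ^ 2)⁻¹ • (gaussDensity (gaussBranch k x) * h (gaussBranch k x)) =
      gaussDensity x * (gaussWeight k x * h (gaussBranch k x)) := by
  filter_upwards [ae_restrict_mem measurableSet_Ioo] with x hx
  rw [smul_eq_mul, ← mul_assoc, gaussDensity_gaussBranch k hx.1.le, mul_assoc]

theorem integrable_gaussWeight_mul (k : ℕ) (hh : Integrable h gaussMeasure) :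
    Integrable (fun x ↦ gaussWeight k x * h (gaussBranch k x)) gaussMeasure := by
  rw [integrable_gaussMeasure_iff] at hh ⊢
  exact (integrableOn_gaussBranch k hh).congr (ae_gaussBranch_eq k h)

theorem hasSum_setIntegral_gaussWeight_mul (hh : Integrable h gaussMeasure)
    (hP : MeasurableSet P) :
    HasSum (fun k ↦ ∫ x in P, gaussWeight k x * h (gaussBranch k x) ∂gaussMeasure)
      (∫ x in gaussMap ⁻¹' P, h x ∂gaussMeasure) := by
  simp only [setIntegral_gaussMeasure _ hP, setIntegral_gaussMeasure _ (measurable_gaussMap hP),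
    smul_eq_mul, ← integral_congr_ae (ae_restrict_of_ae (ae_gaussBranch_eq _ h))]
  exact hasSum_setIntegral_gaussMap_preimage (integrable_gaussMeasure_iff.1 hh) hP

theorem setIntegral_gaussMap_preimage_gaussMeasure (hh : Integrable h gaussMeasure)
    (hP : MeasurableSet P) :
    ∫ x in gaussMap ⁻¹' P, h x ∂gaussMeasure = ∫ x in P, gaussMarkov h x ∂gaussMeasure := by
  refine (hasSum_setIntegral_gaussWeight_mul hh hP).unique ?_
  refine hasSum_integral_of_summable_integral_norm
    (fun k ↦ (integrable_gaussWeight_mul k hh).integrableOn) ?_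
  refine (hasSum_setIntegral_gaussWeight_mul hh.norm hP).summable.congr fun k ↦ ?_
  refine integral_congr_ae ?_
  filter_upwards [ae_restrict_of_ae ae_mem_Ioo_gaussMeasure] with x hx
  rw [norm_mul, norm_of_nonneg (gaussWeight_nonneg k hx.1.le)]

theorem measurePreserving_gaussMap : MeasurePreserving gaussMap gaussMeasure gaussMeasure := by
  refine ⟨measurable_gaussMap, Measure.ext fun P hP ↦ ?_⟩
  have hreal : gaussMeasure.real (gaussMap ⁻¹' P) = gaussMeasure.real P := by
    have hcov := setIntegral_gaussMap_preimage_gaussMeasure (integrable_const (1 : ℝ)) hP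
    have hone : ∫ x in P, gaussMarkov (fun _ ↦ 1) x ∂gaussMeasure = ∫ _ in P, 1 ∂gaussMeasure := by
      refine integral_congr_ae ?_
      filter_upwards [ae_restrict_of_ae ae_mem_Ioo_gaussMeasure] with x hx
      exact gaussMarkov_const_one hx.1.le
    simpa [hone] using hcov
  rw [Measure.map_apply measurable_gaussMap hP]
  exact (measureReal_eq_measureReal_iff).1 hreal

theorem integrable_gaussMeasure_of_monotoneOn (hh : MonotoneOn h (Icc 0 1)) :
    Integrable h gaussMeasure := by
  refine Integrable.of_bound (C := max |h 0| |h 1|) ?_ ?_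
  · exact ((aemeasurable_restrict_of_monotoneOn measurableSet_Ioo
      (hh.mono Ioo_subset_Icc_self)).mono_ac
      (withDensity_absolutelyContinuous _ _)).aestronglyMeasurable
  · filter_upwards [ae_mem_Ioo_gaussMeasure] with x hx
    have hmem := Ioo_subset_Icc_self hx
    exact abs_le_max_abs_abs (hh (left_mem_Icc.2 zero_le_one) hmem hmem.1)
      (hh hmem (right_mem_Icc.2 zero_le_one) hmem.2)

theorem setIntegral_gaussMeasure_mem_Icc (hh : MonotoneOn h (Icc 0 1)) (P : Set ℝ) :
    ∫ x in P, h x ∂gaussMeasure ∈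
      Icc (gaussMeasure.real P * h 0) (gaussMeasure.real P * h 1) := by
  have hint := (integrable_gaussMeasure_of_monotoneOn hh).integrableOn (s := P)
  have hconst (a : ℝ) : gaussMeasure.real P * a = ∫ _ in P, a ∂gaussMeasure := by simp
  rw [hconst, hconst]
  constructor
  · refine integral_mono_ae (integrable_const _) hint ?_
    filter_upwards [ae_restrict_of_ae ae_mem_Ioo_gaussMeasure] with x hx
    exact hh (left_mem_Icc.2 zero_le_one) (Ioo_subset_Icc_self hx) hx.1.le
  · refine integral_mono_ae hint (integrable_const _) ?_
    filter_upwards [ae_restrict_of_ae ae_mem_Ioo_gaussMeasure] with x hx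
    exact hh (Ioo_subset_Icc_self hx) (right_mem_Icc.2 zero_le_one) hx.2.le

theorem abs_setIntegral_gaussMap_iterate_preimage_sub_le (hP : MeasurableSet P) (n : ℕ)
    (hh : MonotoneOn h (Icc 0 1)) :
    |∫ x in gaussMap^[n] ⁻¹' P, h x ∂gaussMeasure - gaussMeasure.real P * ∫ x, h x ∂gaussMeasure| ≤
      (h 1 - h 0) / 2 ^ n := by
  induction n generalizing h with
  | zero =>
    have hmem_inter := setIntegral_gaussMeasure_mem_Icc hh P
    have hmem_univ := setIntegral_gaussMeasure_mem_Icc hh univ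
    rw [probReal_univ, one_mul, one_mul, setIntegral_univ] at hmem_univ
    have hmem_mul : gaussMeasure.real P * ∫ x, h x ∂gaussMeasure ∈
        Icc (gaussMeasure.real P * h 0) (gaussMeasure.real P * h 1) :=
      ⟨by gcongr; exact hmem_univ.1, by gcongr; exact hmem_univ.2⟩
    rw [Function.iterate_zero, preimage_id, pow_zero, div_one]
    calc _ ≤ gaussMeasure.real P * h 1 - gaussMeasure.real P * h 0 :=
          abs_sub_le_of_le_of_le hmem_inter.1 hmem_inter.2 hmem_mul.1 hmem_mul.2
      _ = gaussMeasure.real P * (h 1 - h 0) := (mul_sub _ _ _).symm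
      _ ≤ h 1 - h 0 := mul_le_of_le_one_left
          (sub_nonneg.2 (hmem_univ.1.trans hmem_univ.2)) measureReal_le_one
  | succ n ih =>
    have hpre (Q : Set ℝ) (hQ : MeasurableSet Q) :
        ∫ x in gaussMap ⁻¹' Q, h x ∂gaussMeasure = -∫ x in Q, -gaussMarkov h x ∂gaussMeasure := by
      rw [integral_neg, neg_neg]
      exact setIntegral_gaussMap_preimage_gaussMeasure (integrable_gaussMeasure_of_monotoneOn hh) hQ
    have huniv := hpre univ MeasurableSet.univ
    rw [preimage_univ, setIntegral_univ, setIntegral_univ] at huniv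
    rw [Function.iterate_succ, preimage_comp, hpre _ (measurable_gaussMap.iterate n hP), huniv,
      mul_neg, ← neg_sub', abs_neg]
    calc _ ≤ (gaussMarkov h 0 - gaussMarkov h 1) / 2 ^ n := by
          simpa only [neg_sub_neg] using ih (antitoneOn_gaussMarkov hh).neg
      _ ≤ (h 1 - h 0) / 2 / 2 ^ n := by gcongr; exact gaussMarkov_zero_sub_one_le hh
      _ = (h 1 - h 0) / 2 ^ (n + 1) := by rw [pow_succ', div_div]

theorem tendsto_setIntegral_gaussMap_iterate_of_monotoneOn (hP : MeasurableSet P)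
    (hh : MonotoneOn h (Icc 0 1)) :
    Tendsto (fun n ↦ ∫ x in gaussMap^[n] ⁻¹' P, h x ∂gaussMeasure) atTop
      (𝓝 (gaussMeasure.real P * ∫ x, h x ∂gaussMeasure)) := by
  rw [tendsto_iff_norm_sub_tendsto_zero]
  refine squeeze_zero (fun n ↦ norm_nonneg _)
    (fun n ↦ abs_setIntegral_gaussMap_iterate_preimage_sub_le hP n hh) ?_
  exact tendsto_const_nhds.div_atTop (tendsto_pow_atTop_atTop_of_one_lt one_lt_two)

theorem tendsto_measureReal_gaussMap_iterate_inter_of_isUpperSet (hP : MeasurableSet P)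
    {s : Set ℝ} (hs : IsUpperSet s) (hsm : MeasurableSet s) :
    Tendsto (fun n ↦ (volume.restrict (Ioo (0 : ℝ) 1)).real (gaussMap^[n] ⁻¹' P ∩ s)) atTop
      (𝓝 (gaussMeasure.real P * (volume.restrict (Ioo (0 : ℝ) 1)).real s)) := by
  let h : ℝ → ℝ := s.indicator fun x ↦ log 2 * (1 + x)
  have hh : MonotoneOn h (Icc 0 1) := by
    intro x _ y hy hxy
    by_cases hxs : x ∈ s
    · simp only [h, indicator_of_mem hxs, indicator_of_mem (hs hxy hxs)]
      gcongr
    · simp only [h, indicator_of_notMem hxs]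
      exact indicator_apply_nonneg fun _ ↦
        mul_nonneg (log_pos one_lt_two).le (add_nonneg zero_le_one hy.1)
  have hint {Q : Set ℝ} (hQ : MeasurableSet Q) : ∫ x in Q, h x ∂gaussMeasure =
      (volume.restrict (Ioo (0 : ℝ) 1)).real (Q ∩ s) := by
    have hae : ∀ᵐ x ∂volume.restrict (Ioo (0 : ℝ) 1),
        gaussDensity x * h x = s.indicator (fun _ ↦ 1) x := by
      filter_upwards [ae_restrict_mem measurableSet_Ioo] with x hx
      have hx0 : (0 : ℝ) < 1 + x := add_pos one_pos hx.1
      by_cases hxs : x ∈ s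
      · simp only [h, indicator_of_mem hxs, gaussDensity]; field_simp
      · simp only [h, indicator_of_notMem hxs, mul_zero]
    simp only [setIntegral_gaussMeasure h hQ, smul_eq_mul]
    rw [integral_congr_ae (ae_restrict_of_ae hae),
      setIntegral_indicator hsm]
    simp
  have hlim := tendsto_setIntegral_gaussMap_iterate_of_monotoneOn hP hh
  rw [← setIntegral_univ, hint MeasurableSet.univ, univ_inter] at hlim
  simpa only [hint (measurable_gaussMap.iterate _ hP)] using hlim

theorem tendsto_setIntegral_gaussMap_iterate {E : Type*} [NormedAddCommGroup E] [NormedSpace ℝ E]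
    [CompleteSpace E] {f : ℝ → E} (hf : IntegrableOn f (Ioo 0 1)) (hP : MeasurableSet P) :
    Tendsto (fun n ↦ ∫ x in gaussMap^[n] ⁻¹' P, f x ∂volume.restrict (Ioo 0 1)) atTop
      (𝓝 (gaussMeasure.real P • ∫ x in Ioo 0 1, f x)) := by
  refine tendsto_setIntegral_of_tendsto_measureReal_inter (fun s hs ↦ ?_) hf
  have hgen : (inferInstance : MeasurableSpace ℝ) = MeasurableSpace.generateFrom (range Ioi) :=
    BorelSpace.measurable_eq.trans (borel_eq_generateFrom_Ioi ℝ)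
  refine tendsto_measureReal_inter_of_isPiSystem hgen isPiSystem_Ioi ?_ ?_ hs
  · simpa only [inter_univ] using
      tendsto_measureReal_gaussMap_iterate_inter_of_isUpperSet hP isUpperSet_univ MeasurableSet.univ
  · rintro _ ⟨a, rfl⟩
    exact tendsto_measureReal_gaussMap_iterate_inter_of_isUpperSet hP (isUpperSet_Ioi a)
      measurableSet_Ioi

theorem ae_eq_zero_of_setIntegral_gaussMap_iterate_eq {E : Type*} [NormedAddCommGroup E]
    [NormedSpace ℝ E] [CompleteSpace E] {f : ℝ → E} (hf : IntegrableOn f (Ioo 0 1)) {k : ℕ}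
    (hk : k ≠ 0) (hinv : ∀ P, MeasurableSet P →
      ∫ x in gaussMap^[k] ⁻¹' P, f x ∂volume.restrict (Ioo 0 1) =
        ∫ x in P, f x ∂volume.restrict (Ioo 0 1))
    (hzero : ∫ x in Ioo 0 1, f x = 0) : f =ᵐ[volume.restrict (Ioo 0 1)] 0 := by
  refine hf.ae_eq_zero_of_forall_setIntegral_eq_zero fun P hP _ ↦ ?_
  have hconst (n : ℕ) : ∫ x in gaussMap^[k * n] ⁻¹' P, f x ∂volume.restrict (Ioo 0 1) =
      ∫ x in P, f x ∂volume.restrict (Ioo 0 1) := by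
    induction n with
    | zero => simp
    | succ n ih =>
      rw [mul_add_one, Function.iterate_add, preimage_comp,
        hinv _ (measurable_gaussMap.iterate _ hP), ih]
  have hlim := (tendsto_setIntegral_gaussMap_iterate hf hP).comp
    (tendsto_id.const_mul_atTop' (Nat.pos_of_ne_zero hk))
  simp only [Function.comp_def, id, hconst, hzero, smul_zero] at hlim
  exact tendsto_nhds_unique tendsto_const_nhds hlim

end GaussMeasure

section CriticalDensity

theorem integrableOn_gcrit_two : IntegrableOn (gcrit 2) (Ioi 0) := by
  have hm : Measurable (gcrit 2) :=
    Measurable.ite (measurableSet_le measurable_id measurable_const) (by fun_prop) (by fun_prop)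
  refine (integrable_inv_one_add_sq.integrableOn (s := Ioi 0)).mono' hm.aestronglyMeasurable ?_
  filter_upwards [ae_restrict_mem measurableSet_Ioi] with t ht
  have ht : 0 < t := ht
  rw [norm_eq_abs, gcrit, inv_eq_one_div]
  split_ifs with h
  · rw [abs_of_nonneg (by positivity)]
    gcongr
    norm_num at h
    nlinarith
  · rw [abs_neg, abs_of_nonneg (by positivity)]
    gcongr
    norm_num at h
    nlinarith

theorem gcrit_two_of_mem_Ioo {t : ℝ} (ht : t ∈ Ioo (0 : ℝ) 1) :
    gcrit 2 t = log 2 / 4 * gaussDensity t := by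
  have ht0 := ht.1
  rw [gcrit, if_pos (by rw [div_self two_ne_zero]; exact ht.2.le), gaussDensity]
  field_simp
  ring

theorem gcrit_two_inv {t : ℝ} (ht : t ∈ Ioo (0 : ℝ) 1) :
    (t ^ 2)⁻¹ * gcrit 2 t⁻¹ = -(log 2 / 4 * gaussDensity t) := by
  have ht0 := ht.1
  rw [gcrit, if_neg (by rw [div_self two_ne_zero, not_le]; exact (one_lt_inv₀ ht.1).2 ht.2),
    gaussDensity]
  field_simp
  ring

theorem setIntegral_Ioi_one_eq_setIntegral_Ioo_inv {E : Type*} [NormedAddCommGroup E]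
    [NormedSpace ℝ E] (f : ℝ → E) :
    ∫ t in Ioi (1 : ℝ), f t = ∫ t in Ioo (0 : ℝ) 1, (t ^ 2)⁻¹ • f t⁻¹ := by
  have himage : Inv.inv '' Ioo (0 : ℝ) 1 = Ioi 1 := by
    rw [image_inv_eq_inv, inv_Ioo_0_left one_pos, inv_one]
  rw [← himage, integral_image_eq_integral_abs_deriv_smul measurableSet_Ioo
    (fun t ht ↦ (hasDerivAt_inv ht.1.ne').hasDerivWithinAt) inv_injective.injOn]
  simp only [abs_neg, abs_inv, abs_pow, sq_abs]

theorem restrict_Ioi_zero_eq_add : volume.restrict (Ioi (0 : ℝ)) =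
    volume.restrict (Ioo (0 : ℝ) 1) + volume.restrict (Ioi (1 : ℝ)) := by
  rw [restrict_Ioo_eq_restrict_Ioc, ← Measure.restrict_union (Ioc_disjoint_Ioi le_rfl)
    measurableSet_Ioi, Ioc_union_Ioi_eq_Ioi zero_le_one]

theorem setIntegral_restrict_Ioi_zero_eq_add {E : Type*} [NormedAddCommGroup E] [NormedSpace ℝ E]
    {F : ℝ → E} (hF : IntegrableOn F (Ioi 0)) (S : Set ℝ) :
    ∫ t in S, F t ∂volume.restrict (Ioi 0) =
      ∫ t in S, F t ∂volume.restrict (Ioo 0 1) + ∫ t in S, F t ∂volume.restrict (Ioi 1) := by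
  rw [restrict_Ioi_zero_eq_add, Measure.restrict_add, integral_add_measure
    (Integrable.restrict (hF.mono_set Ioo_subset_Ioi_self))
    (Integrable.restrict (hF.mono_set (Ioi_subset_Ioi zero_le_one)))]

theorem integral_mul_gcrit_two {φ : ℝ → ℂ} {C : ℝ} (hφ : Measurable φ) (hC : ∀ t, ‖φ t‖ ≤ C) :
    ∫ t in Ioi (0 : ℝ), φ t * (gcrit 2 t : ℂ) =
      (log 2 / 4 : ℝ) * (∫ t, φ t ∂gaussMeasure - ∫ t, φ t⁻¹ ∂gaussMeasure) := by
  have hint : IntegrableOn (fun t ↦ φ t * (gcrit 2 t : ℂ)) (Ioi 0) :=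
    (integrableOn_gcrit_two.ofReal (𝕜 := ℂ)).bdd_mul hφ.aestronglyMeasurable (.of_forall hC)
  have hγ (ψ : ℝ → ℂ) : ∫ t, ψ t ∂gaussMeasure = ∫ t in Ioo 0 1, gaussDensity t • ψ t := by
    simpa only [setIntegral_univ] using setIntegral_gaussMeasure ψ MeasurableSet.univ
  have hhead : ∫ t in Ioo 0 1, φ t * (gcrit 2 t : ℂ) =
      (log 2 / 4 : ℝ) * ∫ t, φ t ∂gaussMeasure := by
    rw [hγ, ← integral_const_mul]
    refine setIntegral_congr_fun measurableSet_Ioo fun t ht ↦ ?_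
    simp only [gcrit_two_of_mem_Ioo ht, Complex.real_smul]
    push_cast
    ring
  have htail : ∫ t in Ioi 1, φ t * (gcrit 2 t : ℂ) =
      -((log 2 / 4 : ℝ) * ∫ t, φ t⁻¹ ∂gaussMeasure) := by
    rw [setIntegral_Ioi_one_eq_setIntegral_Ioo_inv, hγ, ← integral_const_mul, ← integral_neg]
    refine setIntegral_congr_fun measurableSet_Ioo fun t ht ↦ ?_
    simp only [Complex.real_smul, mul_left_comm _ (φ t⁻¹), ← Complex.ofReal_mul, gcrit_two_inv ht]
    push_cast
    ring
  rw [restrict_Ioi_zero_eq_add, integral_add_measure (hint.mono_set Ioo_subset_Ioi_self)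
    (hint.mono_set (Ioi_subset_Ioi zero_le_one)), hhead, htail]
  ring

theorem integral_comp_inv_gaussMeasure {E : Type*} [NormedAddCommGroup E] [NormedSpace ℝ E]
    {φ : ℝ → E} (hφ : AEStronglyMeasurable φ gaussMeasure) (hper : Function.Periodic φ 1) :
    ∫ t, φ t⁻¹ ∂gaussMeasure = ∫ t, φ t ∂gaussMeasure := by
  have hfract (t : ℝ) : φ t⁻¹ = φ (gaussMap t) := by
    rw [gaussMap, Int.fract, ← mul_one ((⌊t⁻¹⌋ : ℤ) : ℝ), hper.sub_int_mul_eq]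
  simp only [hfract]
  rw [← integral_map measurable_gaussMap.aemeasurable (measurePreserving_gaussMap.map_eq.symm ▸ hφ),
    measurePreserving_gaussMap.map_eq]

end CriticalDensity

theorem integral_exp_mul_sub_const_mul_eq_zero {X : Type*} [MeasurableSpace X] {μ : Measure X}
    {f g : X → ℂ} {θ : X → ℝ} (hf : Integrable f μ) (hg : Integrable g μ) (hθ : Measurable θ)
    (hθf : ∫ x, Complex.exp (θ x * Complex.I) * f x ∂μ = 0)
    (hθg : ∫ x, Complex.exp (θ x * Complex.I) * g x ∂μ = 0) (c : ℂ) :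
    ∫ x, Complex.exp (θ x * Complex.I) * (f x - c * g x) ∂μ = 0 := by
  have hint {h : X → ℂ} (hh : Integrable h μ) :
      Integrable (fun x ↦ Complex.exp (θ x * Complex.I) * h x) μ :=
    hh.bdd_mul (c := 1) (by fun_prop) (.of_forall fun x ↦ (Complex.norm_exp_ofReal_mul_I _).le)
  simp only [mul_sub, mul_left_comm _ c]
  rw [integral_sub (hint hf) ((hint hg).const_mul c), integral_const_mul, hθf, hθg, mul_zero,
    sub_zero]

/-- The condition that `∫₀^∞ e^{iπαmt} f(t) dt` and `∫₀^∞ e^{-iπβn/t} f(t) dt` vanish for all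
integers `m`, `n`. -/
def HyperbolaAnnihilates (α β : ℝ) (f : ℝ → ℂ) : Prop :=
  (∀ m : ℤ, ∫ t in Ioi (0 : ℝ), Complex.exp (Complex.I * π * α * m * t) * f t = 0) ∧
    ∀ n : ℤ, ∫ t in Ioi (0 : ℝ), Complex.exp (-(Complex.I * π * β * n) / t) * f t = 0

section HyperbolaAnnihilates

variable {α β : ℝ} {f F : ℝ → ℂ}

theorem hyperbolaAnnihilates_two_iff : HyperbolaAnnihilates 2 2 F ↔
    (∀ m : ℤ, ∫ t in Ioi (0 : ℝ), fourier m (t : UnitAddCircle) * F t = 0) ∧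
      ∀ m : ℤ, ∫ t in Ioi (0 : ℝ), fourier m ((t⁻¹ : ℝ) : UnitAddCircle) * F t = 0 := by
  refine and_congr (forall_congr' fun m ↦ ?_) ((Equiv.neg ℤ).forall_congr fun {m} ↦ ?_)
  · have hexp (t : ℝ) : Complex.exp (Complex.I * π * (2 : ℝ) * m * t) =
        fourier m (t : UnitAddCircle) := by
      rw [fourier_coe_apply]; push_cast; ring_nf
    simp only [hexp]
  · have hexp (t : ℝ) : Complex.exp (-(Complex.I * π * (2 : ℝ) * m) / t) =
        fourier (-m) ((t⁻¹ : ℝ) : UnitAddCircle) := by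
      rw [fourier_coe_apply]; push_cast; ring_nf
    simp only [hexp, Equiv.neg_apply]

theorem hyperbolaAnnihilates_comp_mul_left_iff {c : ℝ} (hc : 0 < c) :
    HyperbolaAnnihilates (α * c) (β / c) (fun t ↦ f (c * t)) ↔ HyperbolaAnnihilates α β f := by
  have hcC : (c : ℂ) ≠ 0 := by exact_mod_cast hc.ne'
  have hscale (g : ℝ → ℂ) : ∫ t in Ioi (0 : ℝ), g (c * t) = 0 ↔ ∫ t in Ioi (0 : ℝ), g t = 0 := by
    rw [integral_comp_mul_left_Ioi g 0 hc, mul_zero, smul_eq_zero_iff_right (inv_ne_zero hc.ne')]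
  refine and_congr (forall_congr' fun m ↦ ?_) (forall_congr' fun n ↦ ?_)
  · rw [← hscale fun t ↦ Complex.exp (Complex.I * π * α * m * t) * f t]
    have hexp (t : ℝ) : Complex.I * π * (α * c : ℝ) * m * t =
        Complex.I * π * α * m * (c * t : ℝ) := by
      push_cast; ring
    simp only [hexp]
  · rw [← hscale fun t ↦ Complex.exp (-(Complex.I * π * β * n) / t) * f t]
    have hexp (t : ℝ) : -(Complex.I * π * (β / c : ℝ) * n) / t =
        -(Complex.I * π * β * n) / (c * t : ℝ) := by
      push_cast; field_simp
    simp only [hexp]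

theorem HyperbolaAnnihilates.sub_const_mul {g : ℝ → ℂ} (hf : HyperbolaAnnihilates α β f)
    (hg : HyperbolaAnnihilates α β g) (hfi : IntegrableOn f (Ioi 0))
    (hgi : IntegrableOn g (Ioi 0)) (c : ℂ) : HyperbolaAnnihilates α β fun t ↦ f t - c * g t := by
  refine ⟨fun m ↦ ?_, fun n ↦ ?_⟩
  · have hexp (t : ℝ) : Complex.I * π * α * m * t = (π * α * m * t : ℝ) * Complex.I := by
      push_cast; ring
    have hfm := hf.1 m
    have hgm := hg.1 m
    simp only [hexp] at hfm hgm ⊢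
    exact integral_exp_mul_sub_const_mul_eq_zero hfi hgi (by fun_prop) hfm hgm c
  · have hexp (t : ℝ) : -(Complex.I * π * β * n) / t = (-(π * β * n) / t : ℝ) * Complex.I := by
      push_cast; ring
    have hfn := hf.2 n
    have hgn := hg.2 n
    simp only [hexp] at hfn hgn ⊢
    exact integral_exp_mul_sub_const_mul_eq_zero hfi hgi (by fun_prop) hfn hgn c

end HyperbolaAnnihilates

section CriticalCase

variable {F : ℝ → ℂ}

theorem hyperbolaAnnihilates_gcrit_two : HyperbolaAnnihilates 2 2 fun t ↦ (gcrit 2 t : ℂ) := by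
  have hbound (m : ℤ) (z : UnitAddCircle) : ‖fourier m z‖ ≤ 1 := (Circle.norm_coe _).le
  have hmeas (m : ℤ) : Measurable fun t : ℝ ↦ (fourier m (t : UnitAddCircle) : ℂ) :=
    ((map_continuous (fourier m)).comp (AddCircle.continuous_mk' 1)).measurable
  have hinv (m : ℤ) : ∫ t : ℝ, fourier m ((t⁻¹ : ℝ) : UnitAddCircle) ∂gaussMeasure =
      ∫ t : ℝ, fourier m (t : UnitAddCircle) ∂gaussMeasure :=
    integral_comp_inv_gaussMeasure (hmeas m).aestronglyMeasurable fun t ↦ by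
      simp only [AddCircle.coe_add_period]
  rw [hyperbolaAnnihilates_two_iff]
  constructor <;> intro m
  · rw [integral_mul_gcrit_two (hmeas m) fun t ↦ hbound m t, hinv, sub_self, mul_zero]
  · rw [integral_mul_gcrit_two (φ := fun t ↦ fourier m ((t⁻¹ : ℝ) : UnitAddCircle))
      ((hmeas m).comp measurable_inv) fun t ↦ hbound m _]
    simp only [inv_inv, hinv, sub_self, mul_zero]

theorem HyperbolaAnnihilates.setIntegral_Ioo_eq_neg_fract_preimage
    (hann : HyperbolaAnnihilates 2 2 F) (hF : IntegrableOn F (Ioi 0)) {E : Set ℝ}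
    (hE : MeasurableSet E) :
    ∫ t in E, F t ∂volume.restrict (Ioo 0 1) =
      -∫ t in Int.fract ⁻¹' E, F t ∂volume.restrict (Ioi 1) := by
  have hsum := (setIntegral_restrict_Ioi_zero_eq_add hF _).symm.trans
    (setIntegral_fract_preimage_eq_zero hF measurable_id (hyperbolaAnnihilates_two_iff.1 hann).1 hE)
  have hfract : (Int.fract ⁻¹' E : Set ℝ) =ᵐ[volume.restrict (Ioo 0 1)] E := by
    filter_upwards [ae_restrict_mem measurableSet_Ioo] with t ht
    exact congrArg (· ∈ E) (Int.fract_eq_self.2 ⟨ht.1.le, ht.2⟩)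
  rw [← setIntegral_congr_set hfract]
  exact eq_neg_of_add_eq_zero_left hsum

theorem HyperbolaAnnihilates.setIntegral_Ioo_gaussMap_preimage_eq_neg_inv_preimage
    (hann : HyperbolaAnnihilates 2 2 F) (hF : IntegrableOn F (Ioi 0)) {E : Set ℝ}
    (hE : MeasurableSet E) :
    ∫ t in gaussMap ⁻¹' E, F t ∂volume.restrict (Ioo 0 1) =
      -∫ t in Inv.inv ⁻¹' E, F t ∂volume.restrict (Ioi 1) := by
  have hsum := (setIntegral_restrict_Ioi_zero_eq_add hF _).symm.trans
    (setIntegral_fract_preimage_eq_zero hF measurable_inv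
      (hyperbolaAnnihilates_two_iff.1 hann).2 hE)
  have hinv : (gaussMap ⁻¹' E : Set ℝ) =ᵐ[volume.restrict (Ioi 1)] Inv.inv ⁻¹' E := by
    filter_upwards [ae_restrict_mem measurableSet_Ioi] with t ht
    have ht : 1 < t := ht
    exact congrArg (· ∈ E) (Int.fract_eq_self.2 ⟨by positivity, inv_lt_one_of_one_lt₀ ht⟩)
  rw [← setIntegral_congr_set hinv]
  exact eq_neg_of_add_eq_zero_left hsum

theorem HyperbolaAnnihilates.ae_eq_zero_of_setIntegral_Ioo_eq_zero
    (hann : HyperbolaAnnihilates 2 2 F) (hF : IntegrableOn F (Ioi 0))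
    (hzero : ∫ t in Ioo 0 1, F t = 0) : F =ᵐ[volume.restrict (Ioi 0)] 0 := by
  have hhead : F =ᵐ[volume.restrict (Ioo 0 1)] 0 := by
    refine ae_eq_zero_of_setIntegral_gaussMap_iterate_eq (hF.mono_set Ioo_subset_Ioi_self)
      two_ne_zero (fun P hP ↦ ?_) hzero
    have hcomp : Inv.inv ⁻¹' (gaussMap ⁻¹' P) = Int.fract ⁻¹' P := by
      ext t
      simp only [mem_preimage, gaussMap, inv_inv]
    rw [hann.setIntegral_Ioo_eq_neg_fract_preimage hF hP, ← hcomp]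
    exact hann.setIntegral_Ioo_gaussMap_preimage_eq_neg_inv_preimage hF (measurable_gaussMap hP)
  have htail : F =ᵐ[volume.restrict (Ioi 1)] 0 := by
    refine (hF.mono_set (Ioi_subset_Ioi zero_le_one)).ae_eq_zero_of_forall_setIntegral_eq_zero
      fun S hS _ ↦ ?_
    have hinv := hann.setIntegral_Ioo_gaussMap_preimage_eq_neg_inv_preimage hF (measurable_inv hS)
    rw [integral_congr_ae (ae_restrict_of_ae hhead), ← preimage_comp (g := Inv.inv) (f := Inv.inv),
      inv_involutive.comp_self, preimage_id] at hinv
    simpa using hinv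
  rw [restrict_Ioi_zero_eq_add]
  exact ae_add_measure_iff.2 ⟨hhead, htail⟩

theorem HyperbolaAnnihilates.exists_ae_eq_mul_gcrit_two (hann : HyperbolaAnnihilates 2 2 F)
    (hF : IntegrableOn F (Ioi 0)) :
    ∃ c : ℂ, ∀ᵐ t ∂volume.restrict (Ioi 0), F t = c * gcrit 2 t := by
  have hg : IntegrableOn (fun t ↦ (gcrit 2 t : ℂ)) (Ioi 0) := integrableOn_gcrit_two.ofReal
  have hmass : ∫ t in Ioo 0 1, (gcrit 2 t : ℂ) ≠ 0 := by
    rw [integral_complex_ofReal, setIntegral_congr_fun measurableSet_Ioo fun t ↦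
      gcrit_two_of_mem_Ioo, integral_const_mul, integral_gaussDensity, mul_one]
    exact_mod_cast (div_pos (log_pos one_lt_two) four_pos).ne'
  refine ⟨(∫ t in Ioo 0 1, F t) / ∫ t in Ioo 0 1, (gcrit 2 t : ℂ), ?_⟩
  set c := (∫ t in Ioo 0 1, F t) / ∫ t in Ioo 0 1, (gcrit 2 t : ℂ) with hc
  have hzero : ∫ t in Ioo 0 1, (F t - c * gcrit 2 t) = 0 := by
    rw [integral_sub (hF.mono_set Ioo_subset_Ioi_self)
      ((hg.mono_set Ioo_subset_Ioi_self).const_mul c), integral_const_mul, hc,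
      div_mul_cancel₀ _ hmass, sub_self]
  have hdiff := hann.sub_const_mul hyperbolaAnnihilates_gcrit_two hF hg c
  filter_upwards [hdiff.ae_eq_zero_of_setIntegral_Ioo_eq_zero (hF.sub (hg.const_mul c)) hzero]
    with t ht using sub_eq_zero.1 ht

end CriticalCase

section Rescaling

variable {α β : ℝ}

theorem gcrit_comp_two_div_mul (hα : 0 < α) (t : ℝ) : gcrit α (2 / α * t) = gcrit 2 t := by
  have hle : 2 / α * t ≤ 2 / α ↔ t ≤ 2 / 2 := by
    rw [mul_le_iff_le_one_right (by positivity), div_self two_ne_zero]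
  have hmul : α * (2 / α * t) = 2 * t := by field_simp
  simp only [gcrit, hle, hmul]

theorem integrableOn_gcrit (hα : 0 < α) : IntegrableOn (gcrit α) (Ioi 0) := by
  have hscale := integrableOn_Ioi_comp_mul_left_iff (gcrit α) 0 (a := 2 / α) (by positivity)
  rw [mul_zero] at hscale
  simpa only [← hscale, gcrit_comp_two_div_mul hα] using integrableOn_gcrit_two

theorem hyperbolaAnnihilates_comp_two_div_mul_iff (hα : 0 < α) (hcrit : α * β = 4) {f : ℝ → ℂ} :
    HyperbolaAnnihilates 2 2 (fun t ↦ f (2 / α * t)) ↔ HyperbolaAnnihilates α β f := by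
  have hα2 : α * (2 / α) = 2 := by field_simp
  have hβ2 : β / (2 / α) = 2 := by field_simp; linarith
  simpa only [hα2, hβ2] using
    hyperbolaAnnihilates_comp_mul_left_iff (α := α) (β := β) (f := f) (c := 2 / α) (by positivity)

theorem hyperbolaAnnihilates_gcrit (hα : 0 < α) (hcrit : α * β = 4) :
    HyperbolaAnnihilates α β fun t ↦ (gcrit α t : ℂ) := by
  rw [← hyperbolaAnnihilates_comp_two_div_mul_iff hα hcrit]
  simpa only [gcrit_comp_two_div_mul hα] using hyperbolaAnnihilates_gcrit_two

theorem ae_restrict_Ioi_zero_of_comp_mul_left {c : ℝ} (hc : 0 < c) {p : ℝ → Prop}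
    (h : ∀ᵐ t ∂volume.restrict (Ioi 0), p (c * t)) : ∀ᵐ t ∂volume.restrict (Ioi 0), p t := by
  have hquasi : Measure.QuasiMeasurePreserving (fun t : ℝ ↦ c⁻¹ * t) :=
    ⟨by fun_prop, by
      rw [Real.map_volume_mul_left (inv_ne_zero hc.ne')]
      exact Measure.smul_absolutelyContinuous⟩
  rw [ae_restrict_iff' measurableSet_Ioi] at h ⊢
  filter_upwards [hquasi.ae h] with t ht ht0
  simpa only [mul_inv_cancel_left₀ hc.ne'] using ht (mul_pos (inv_pos.2 hc) ht0)

theorem HyperbolaAnnihilates.exists_ae_eq_mul_gcrit (hα : 0 < α) (hcrit : α * β = 4) {f : ℝ → ℂ}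
    (hann : HyperbolaAnnihilates α β f) (hf : IntegrableOn f (Ioi 0)) :
    ∃ c : ℂ, ∀ᵐ t ∂volume.restrict (Ioi 0), f t = c * gcrit α t := by
  have hpos : 0 < 2 / α := by positivity
  have hF : IntegrableOn (fun t ↦ f (2 / α * t)) (Ioi 0) := by
    rwa [integrableOn_Ioi_comp_mul_left_iff f 0 hpos, mul_zero]
  obtain ⟨c, hc⟩ := ((hyperbolaAnnihilates_comp_two_div_mul_iff hα hcrit).2 hann
    ).exists_ae_eq_mul_gcrit_two hF
  refine ⟨c, ae_restrict_Ioi_zero_of_comp_mul_left hpos ?_⟩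
  simpa only [gcrit_comp_two_div_mul hα] using hc

end Rescaling

/-- Critical regime `αβ = 4` for one branch of the hyperbola: the space of
annihilating `L¹` densities is exactly one-dimensional, spanned by `gcrit α`. -/
theorem stmt_2 (α β : ℝ) (hα : 0 < α) (hβ : 0 < β) (hcrit : α * β = 4) :
    IntegrableOn (gcrit α) (Set.Ioi 0) ∧
    (∀ m : ℤ, ∫ t in Set.Ioi (0:ℝ),
        Complex.exp (Complex.I * π * α * m * t) * (gcrit α t : ℂ) = 0) ∧
    (∀ n : ℤ, ∫ t in Set.Ioi (0:ℝ),
        Complex.exp (-(Complex.I * π * β * n) / t) * (gcrit α t : ℂ) = 0) ∧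
    (∀ f : ℝ → ℂ, IntegrableOn f (Set.Ioi 0) →
      (∀ m : ℤ, ∫ t in Set.Ioi (0:ℝ),
          Complex.exp (Complex.I * π * α * m * t) * f t = 0) →
      (∀ n : ℤ, ∫ t in Set.Ioi (0:ℝ),
          Complex.exp (-(Complex.I * π * β * n) / t) * f t = 0) →
      ∃ c : ℂ, ∀ᵐ t ∂(volume.restrict (Set.Ioi (0:ℝ))), f t = c * gcrit α t) :=
  ⟨integrableOn_gcrit hα, (hyperbolaAnnihilates_gcrit hα hcrit).1,
    (hyperbolaAnnihilates_gcrit hα hcrit).2,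
    fun _ hf hexp hexpInv ↦ HyperbolaAnnihilates.exists_ae_eq_mul_gcrit hα hcrit ⟨hexp, hexpInv⟩ hf⟩
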